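/- arXiv:1609.07454 — 3 statements merged into one kernel-verified Lean document; each statement's English description precedes it below -/
import Mathlib

section
/- Let H₀, H₁, H₂ be complex Hilbert spaces and let S : H₀ →ₗ.[ℂ] H₁ and T : H₁ →ₗ.[ℂ] H₂ be densely defined closed unbounded operators such that range S ⊆ ker T. If ker S† = range T† (i.e., the homology of the dual complex at H₁ vanishes), then ker T = closure(range S). In particular, if in addition range S is closed, then ker T = range S. -/
/-- Theorem 2.2, first part (Hilbert-space instance of Serre duality): for densely defined
closed operators `S : H₀ →ₗ.[ℂ] H₁` and `T : H₁ →ₗ.[ℂ] H₂` with `range S ⊆ ker T`, if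
`ker S† = range T†` (vanishing of the dual homology at `H₁`), then `ker T = closure (range S)`;
in particular, if moreover `range S` is closed, then `ker T = range S`. -/
theorem stmt_3 {H₀ H₁ H₂ : Type*}
    [NormedAddCommGroup H₀] [InnerProductSpace ℂ H₀] [CompleteSpace H₀]
    [NormedAddCommGroup H₁] [InnerProductSpace ℂ H₁] [CompleteSpace H₁]
    [NormedAddCommGroup H₂] [InnerProductSpace ℂ H₂] [CompleteSpace H₂]
    (S : H₀ →ₗ.[ℂ] H₁) (T : H₁ →ₗ.[ℂ] H₂)
    (hSdense : Dense (S.domain : Set H₀)) (hTdense : Dense (T.domain : Set H₁))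
    (hSclosed : S.IsClosed) (hTclosed : T.IsClosed)
    (hST : (Set.range fun x : S.domain => S x) ⊆
      {u : H₁ | ∃ hu : u ∈ T.domain, T ⟨u, hu⟩ = 0})
    (hdual : {u : H₁ | ∃ hu : u ∈ S.adjoint.domain, S.adjoint ⟨u, hu⟩ = 0} =
      Set.range fun g : T.adjoint.domain => T.adjoint g) :
    ({u : H₁ | ∃ hu : u ∈ T.domain, T ⟨u, hu⟩ = 0} =
        closure (Set.range fun x : S.domain => S x)) ∧
      (IsClosed (Set.range fun x : S.domain => S x) →
        {u : H₁ | ∃ hu : u ∈ T.domain, T ⟨u, hu⟩ = 0} =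
          Set.range fun x : S.domain => S x) := by
  have key : {u : H₁ | ∃ hu : u ∈ T.domain, T ⟨u, hu⟩ = 0} =
        closure (Set.range fun x : S.domain => S x) := by
    apply Set.Subset.antisymm
    · rintro u ⟨hu, hTu⟩
      have hr : (Set.range fun x : S.domain => S x) =
          ((LinearMap.range S.toFun : Submodule ℂ H₁) : Set H₁) := by
        ext z
        simp [LinearMap.mem_range]
      rw [hr, ← Submodule.topologicalClosure_coe,
        ← Submodule.orthogonal_orthogonal_eq_closure, SetLike.mem_coe,
        Submodule.mem_orthogonal]
      intro v hv
      have hv0 : ∀ x : S.domain, inner ℂ v (S x) = 0 := fun x =>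
        (Submodule.mem_orthogonal' _ _).1 hv _ ⟨x, rfl⟩
      have hvd : v ∈ S.adjoint.domain :=
        LinearPMap.mem_adjoint_domain_of_exists v ⟨0, fun x => by rw [hv0 x, inner_zero_left]⟩
      have hvk : v ∈ {u : H₁ | ∃ hu : u ∈ S.adjoint.domain, S.adjoint ⟨u, hu⟩ = 0} :=
        ⟨hvd, LinearPMap.adjoint_apply_eq hSdense ⟨v, hvd⟩
          (fun x => by rw [hv0 x, inner_zero_left])⟩
      rw [hdual] at hvk
      obtain ⟨g, rfl⟩ := hvk
      have h := LinearPMap.adjoint_isFormalAdjoint hTdense g ⟨u, hu⟩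
      rw [hTu, inner_zero_right] at h
      exact h
    · refine closure_minimal hST ?_
      have hk : {u : H₁ | ∃ hu : u ∈ T.domain, T ⟨u, hu⟩ = 0} =
          (fun u : H₁ => (u, (0 : H₂))) ⁻¹' (T.graph : Set (H₁ × H₂)) := by
        ext u
        simp only [Set.mem_ofPred_eq, Set.mem_preimage, SetLike.mem_coe, LinearPMap.mem_graph_iff]
        constructor
        · rintro ⟨hu, h⟩
          exact ⟨⟨u, hu⟩, rfl, h⟩
        · rintro ⟨y, rfl, h⟩
          exact ⟨y.2, h⟩
      rw [hk]
      exact IsClosed.preimage (by fun_prop) hTclosed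
  exact ⟨key, fun hc => by rw [key, hc.closure_eq]⟩
end

section
/- Let H₁ and H₂ be complex Hilbert spaces and T : H₁ →ₗ.[ℂ] H₂ a densely defined closed unbounded operator. Then the range of T is closed in H₂ if and only if the range of the adjoint T† is closed in H₁. -/
theorem snd_adjoint_closed {E F : Type*}
    [NormedAddCommGroup E] [InnerProductSpace ℂ E] [CompleteSpace E]
    [NormedAddCommGroup F] [InnerProductSpace ℂ F] [CompleteSpace F]
    (G : Submodule ℂ (E × F)) (hG : IsClosed (G : Set (E × F)))
    (hR : IsClosed ((G.map (LinearMap.snd ℂ E F) : Submodule ℂ F) : Set F)) :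
    IsClosed ((G.adjoint.map (LinearMap.snd ℂ F E) : Submodule ℂ E) : Set E) := by
  set R := G.map (LinearMap.snd ℂ E F) with hRdef
  have hGc : CompleteSpace G := hG.completeSpace_coe
  have hRc : CompleteSpace R := hR.completeSpace_coe
  let A : G →L[ℂ] R :=
    ((ContinuousLinearMap.snd ℂ E F).comp G.subtypeL).codRestrict R
      (fun g => Submodule.mem_map_of_mem (f := LinearMap.snd ℂ E F) g.2)
  have hA : ∀ g : G, ((A g : R) : F) = (g : E × F).2 := fun g => rfl
  have hsurj : Function.Surjective A := by
    rintro ⟨r, hr⟩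
    obtain ⟨g, hg, rfl⟩ := hr
    exact ⟨⟨g, hg⟩, rfl⟩
  obtain ⟨C, hC, hpre⟩ := A.exists_preimage_norm_le hsurj
  choose σ hσ hσn using hpre
  let K : Submodule ℂ E := G.comap (LinearMap.inl ℂ E F)
  have hEq : G.adjoint.map (LinearMap.snd ℂ F E) = Kᗮ := by
    ext z
    constructor
    · rintro ⟨w, hw, rfl⟩
      rw [Submodule.mem_orthogonal]
      intro u hu
      have := (Submodule.mem_adjoint_iff G w).1 hw u 0 hu
      simpa using this
    · intro hz
      have key : ∀ g h : G, A g = A h →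
          inner ℂ z (g : E × F).1 = inner ℂ z (h : E × F).1 := by
        intro g h hgh
        have h2 : (g : E × F).2 = (h : E × F).2 := by
          rw [← hA, ← hA, hgh]
        have hk : (g : E × F).1 - (h : E × F).1 ∈ K := by
          change ((g : E × F).1 - (h : E × F).1, (0 : F)) ∈ G
          have : ((g : E × F).1 - (h : E × F).1, (0 : F)) = (g : E × F) - h := by
            ext <;> simp [h2]
          rw [this]
          exact G.sub_mem g.2 h.2
        have := (Submodule.mem_orthogonal' K z).1 hz _ hk
        rwa [inner_sub_right, sub_eq_zero] at this
      let f : R →ₗ[ℂ] ℂ :=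
        { toFun := fun r => inner ℂ z (σ r : E × F).1
          map_add' := fun r s => by
            rw [key (σ (r + s)) (σ r + σ s) (by rw [map_add, hσ, hσ, hσ])]
            simp [inner_add_right]
          map_smul' := fun c r => by
            rw [key (σ (c • r)) (c • σ r) (by rw [map_smul, hσ, hσ])]
            simp [inner_smul_right] }
      let f' : StrongDual ℂ R := f.mkContinuous (‖z‖ * C) (fun r => by
        change ‖inner ℂ z (σ r : E × F).1‖ ≤ _
        calc _ ≤ ‖z‖ * ‖(σ r : E × F).1‖ := norm_inner_le_norm _ _
          _ ≤ ‖z‖ * (C * ‖r‖) := by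
            gcongr
            exact (norm_fst_le (σ r : E × F)).trans (hσn r)
          _ = _ := by ring)
      let y : R := (InnerProductSpace.toDual ℂ R).symm f'
      refine ⟨((y : F), z), ?_, rfl⟩
      rw [SetLike.mem_coe, Submodule.mem_adjoint_iff]
      intro a b hab
      have h1 : inner ℂ y (A ⟨(a, b), hab⟩) = f' (A ⟨(a, b), hab⟩) :=
        InnerProductSpace.toDual_symm_apply
      have h2 : f' (A ⟨(a, b), hab⟩) = inner ℂ z a :=
        key (σ (A ⟨(a, b), hab⟩)) ⟨(a, b), hab⟩ (hσ _)
      have h3 : inner ℂ (y : F) b = inner ℂ z a := by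
        rw [← h2, ← h1]; rfl
      rw [sub_eq_zero]
      dsimp only
      rw [← inner_conj_symm, h3, inner_conj_symm]
  rw [hEq]
  exact Submodule.isClosed_orthogonal K

theorem adjoint_adjoint_of_closed {E F : Type*}
    [NormedAddCommGroup E] [InnerProductSpace ℂ E] [CompleteSpace E]
    [NormedAddCommGroup F] [InnerProductSpace ℂ F] [CompleteSpace F]
    (G : Submodule ℂ (E × F)) (hG : IsClosed (G : Set (E × F))) :
    G.adjoint.adjoint = G := by
  let G' : Submodule ℂ (WithLp 2 (E × F)) :=
    G.comap (WithLp.linearEquiv 2 ℂ (E × F)).toLinearMap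
  have hG' : IsClosed (G' : Set (WithLp 2 (E × F))) :=
    hG.preimage (WithLp.prod_continuous_ofLp 2 E F)
  have hc : CompleteSpace G' := hG'.completeSpace_coe
  ext ⟨a, b⟩
  constructor
  · intro h
    rw [Submodule.mem_adjoint_iff] at h
    have : WithLp.toLp 2 (a, b) ∈ G'ᗮᗮ := by
      rw [Submodule.mem_orthogonal]
      intro u hu
      rw [Submodule.mem_orthogonal] at hu
      have hm : (u.ofLp.2, -u.ofLp.1) ∈ G.adjoint := by
        rw [Submodule.mem_adjoint_iff]
        intro c d hcd
        have := hu (WithLp.toLp 2 (c, d)) hcd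
        rw [WithLp.prod_inner_apply] at this
        simp only [inner_neg_right, sub_neg_eq_add]
        rw [add_comm]
        exact this
      have := h _ _ hm
      rw [WithLp.prod_inner_apply]
      simp only [inner_neg_left] at this ⊢
      linear_combination -this
    rw [Submodule.orthogonal_orthogonal] at this
    exact this
  · intro h
    rw [Submodule.mem_adjoint_iff]
    intro c d hcd
    have := (Submodule.mem_adjoint_iff G _).1 hcd a b h
    dsimp only at this ⊢
    rw [sub_eq_zero] at this ⊢
    rw [← inner_conj_symm, ← this, inner_conj_symm]

theorem range_eq_snd_graph {E F : Type*}
    [NormedAddCommGroup E] [InnerProductSpace ℂ E]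
    [NormedAddCommGroup F] [InnerProductSpace ℂ F] (T : E →ₗ.[ℂ] F) :
    (Set.range fun x : T.domain => T x) =
      ((T.graph.map (LinearMap.snd ℂ E F) : Submodule ℂ F) : Set F) := by
  ext y
  constructor
  · rintro ⟨x, rfl⟩
    exact ⟨((x : E), T x), T.mem_graph x, rfl⟩
  · rintro ⟨p, hp, rfl⟩
    obtain ⟨x, hx⟩ := (LinearPMap.mem_graph_iff T).1 hp
    exact ⟨x, hx.2⟩



/-- Closed range theorem for densely defined closed unbounded operators between complex
Hilbert spaces: `range T` is closed if and only if `range T†` is closed. This is the operative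
content in the `L²` setting of the second part of Theorem 2.2 (Serre duality). -/
theorem stmt_4 {H₁ H₂ : Type*}
    [NormedAddCommGroup H₁] [InnerProductSpace ℂ H₁] [CompleteSpace H₁]
    [NormedAddCommGroup H₂] [InnerProductSpace ℂ H₂] [CompleteSpace H₂]
    (T : H₁ →ₗ.[ℂ] H₂) (hTdense : Dense (T.domain : Set H₁)) (hTclosed : T.IsClosed) :
    IsClosed (Set.range fun x : T.domain => T x) ↔
      IsClosed (Set.range fun y : T.adjoint.domain => T.adjoint y) := by
  rw [range_eq_snd_graph, range_eq_snd_graph,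
    LinearPMap.adjoint_graph_eq_graph_adjoint hTdense]
  constructor
  · exact snd_adjoint_closed T.graph hTclosed
  · intro h
    have hcl : IsClosed (T.graph.adjoint : Set (H₂ × H₁)) := by
      have := LinearPMap.adjoint_isClosed hTdense
      rwa [LinearPMap.IsClosed, LinearPMap.adjoint_graph_eq_graph_adjoint hTdense] at this
    have := snd_adjoint_closed T.graph.adjoint hcl h
    rwa [adjoint_adjoint_of_closed T.graph hTclosed] at this
end

section
/- Let H₀, H₁, H₂ be complex Hilbert spaces and let S : H₀ →ₗ.[ℂ] H₁ and T : H₁ →ₗ.[ℂ] H₂ be densely defined closed unbounded operators such that range S ⊆ ker T. Then the following are equivalent: (a) there exists c > 0 such that c·‖u‖² ≤ ‖T u‖² + ‖S† u‖² for every u ∈ dom T ∩ dom S†; (b) range S is closed in H₁, range T is closed in H₂, and ker T = range S. -/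
section Aux

variable {E F : Type*}
  [NormedAddCommGroup E] [InnerProductSpace ℂ E] [CompleteSpace E]
  [NormedAddCommGroup F] [InnerProductSpace ℂ F] [CompleteSpace F]

/-- The kernel of a partially defined operator, as a submodule of the whole space. -/
def pker (T : E →ₗ.[ℂ] F) : Submodule ℂ E := T.graph.comap (LinearMap.inl ℂ E F)

theorem mem_pker (T : E →ₗ.[ℂ] F) (u : E) :
    u ∈ pker T ↔ ∃ hu : u ∈ T.domain, T ⟨u, hu⟩ = 0 := by
  simp only [pker, Submodule.mem_comap, LinearMap.inl_apply, LinearPMap.mem_graph_iff]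
  constructor
  · rintro ⟨y, rfl, h⟩
    exact ⟨y.2, h⟩
  · rintro ⟨hu, h⟩
    exact ⟨⟨u, hu⟩, rfl, h⟩

theorem isClosed_pker (T : E →ₗ.[ℂ] F) (hT : T.IsClosed) : IsClosed (pker T : Set E) := by
  have h : IsClosed (T.graph : Set (E × F)) := hT
  exact h.preimage (by fun_prop : Continuous fun u : E => ((u, 0) : E × F))

/-- Open mapping theorem for closed operators with closed range. -/
theorem open_mapping (T : E →ₗ.[ℂ] F) (hT : T.IsClosed)
    (hr : IsClosed (Set.range fun x : T.domain => T x)) :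
    ∃ C > (0 : ℝ), ∀ x : T.domain, ∃ w : T.domain, T w = T x ∧ ‖(w : E)‖ ≤ C * ‖T x‖ := by
  have hg : IsClosed (T.graph : Set (E × F)) := hT
  let R : Submodule ℂ F := LinearMap.range T.toFun
  have hR : IsClosed (R : Set F) := by
    convert hr using 1
    exact LinearMap.coe_range _
  haveI : CompleteSpace T.graph := hg.completeSpace_coe
  haveI : CompleteSpace R := hR.completeSpace_coe
  let f : T.graph →L[ℂ] R :=
    ((ContinuousLinearMap.snd ℂ E F).comp T.graph.subtypeL).codRestrict R (by
      rintro ⟨p, hp⟩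
      obtain ⟨y, hy1, hy2⟩ := (T.mem_graph_iff).1 hp
      exact ⟨y, hy2⟩)
  have hf : Function.Surjective f := by
    rintro ⟨_, x, rfl⟩
    exact ⟨⟨_, T.mem_graph x⟩, rfl⟩
  obtain ⟨C, hC, h⟩ := f.exists_preimage_norm_le hf
  refine ⟨C, hC, fun x => ?_⟩
  obtain ⟨⟨p, hp⟩, h1, h2⟩ := h ⟨T x, x, rfl⟩
  obtain ⟨y, hy1, hy2⟩ := (T.mem_graph_iff).1 hp
  refine ⟨y, ?_, ?_⟩
  · have := congrArg Subtype.val h1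
    exact hy2.trans this
  · rw [hy1]
    exact (norm_fst_le p).trans h2

theorem closed_range_of_bound (T : E →ₗ.[ℂ] F) (hT : T.IsClosed) (C : ℝ)
    (h : ∀ x : T.domain, (x : E) ∈ (pker T)ᗮ → ‖(x : E)‖ ≤ C * ‖T x‖) :
    IsClosed (Set.range fun x : T.domain => T x) := by
  have hg : IsClosed (T.graph : Set (E × F)) := hT
  haveI : CompleteSpace (pker T) := (isClosed_pker T hT).completeSpace_coe
  let G : Submodule ℂ (E × F) := T.graph ⊓ (pker T)ᗮ.comap (LinearMap.fst ℂ E F)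
  have hG : IsClosed (G : Set (E × F)) :=
    hg.inter ((Submodule.isClosed_orthogonal (pker T)).preimage continuous_fst)
  haveI : CompleteSpace G := hG.completeSpace_coe
  let f : G →L[ℂ] F := (ContinuousLinearMap.snd ℂ E F).comp G.subtypeL
  have hf : AntilipschitzWith (Real.toNNReal (max C 1)) f := by
    refine AddMonoidHomClass.antilipschitz_of_bound f ?_
    rintro ⟨p, hp1, hp2⟩
    obtain ⟨y, hy1, hy2⟩ := (T.mem_graph_iff).1 hp1
    have h3 := h y (by rw [hy1]; exact hp2)
    rw [hy1, hy2] at h3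
    rw [Real.coe_toNNReal _ (le_trans zero_le_one (le_max_right _ _))]
    change ‖p‖ ≤ max C 1 * ‖p.2‖
    rw [Prod.norm_def]
    refine max_le (h3.trans ?_) ?_
    · gcongr
      exact le_max_left _ _
    · exact le_mul_of_one_le_left (norm_nonneg _) (le_max_right _ _)
  have hcl := hf.isClosed_range f.uniformContinuous
  convert hcl using 1
  ext y
  constructor
  · rintro ⟨x, rfl⟩
    have hP : (pker T).starProjection (x : E) ∈ pker T := Submodule.starProjection_apply_mem _ _
    obtain ⟨hd, h0⟩ := (mem_pker T _).1 hP
    have hm := T.mem_graph (x - ⟨_, hd⟩)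
    rw [T.map_sub, h0, sub_zero] at hm
    exact ⟨⟨_, hm, Submodule.sub_starProjection_mem_orthogonal (K := pker T) (x : E)⟩, rfl⟩
  · rintro ⟨⟨p, hp1, hp2⟩, rfl⟩
    obtain ⟨y, hy1, hy2⟩ := (T.mem_graph_iff).1 hp1
    exact ⟨y, hy2⟩

theorem adjoint_of_orth (S : E →ₗ.[ℂ] F) (hS : Dense (S.domain : Set E)) (u : F)
    (h : ∀ x : S.domain, inner ℂ u (S x) = 0) :
    ∃ hu : u ∈ S.adjoint.domain, S.adjoint ⟨u, hu⟩ = 0 := by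
  have hu : u ∈ S.adjoint.domain :=
    LinearPMap.mem_adjoint_domain_of_exists u ⟨0, fun x => by simp [h]⟩
  exact ⟨hu, LinearPMap.adjoint_apply_eq hS _ fun x => by simp [h]⟩

/-- A pair which is formally in the graph of `S††` is in the graph of `S`. -/
theorem mem_graph_of_adjoint (S : E →ₗ.[ℂ] F) (hS : Dense (S.domain : Set E))
    (hc : S.IsClosed) (w : E) (f : F)
    (h : ∀ v : S.adjoint.domain, inner ℂ f (v : F) = inner ℂ w (S.adjoint v)) :
    (w, f) ∈ S.graph := by
  have hg : IsClosed (S.graph : Set (E × F)) := hc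
  let G : Submodule ℂ (WithLp 2 (E × F)) :=
    S.graph.comap (WithLp.linearEquiv 2 ℂ (E × F)).toLinearMap
  have hG : IsClosed (G : Set (WithLp 2 (E × F))) :=
    hg.preimage (WithLp.prod_continuous_ofLp 2 E F)
  haveI : CompleteSpace G := hG.completeSpace_coe
  have key : WithLp.toLp 2 (w, f) ∈ Gᗮᗮ := by
    rw [Submodule.mem_orthogonal']
    intro p hp
    rw [Submodule.mem_orthogonal'] at hp
    have h1 : ∀ x : S.domain, inner ℂ (-p.fst) (x : E) = inner ℂ p.snd (S x) := by
      intro x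
      have := hp (WithLp.toLp 2 ((x : E), S x)) (S.mem_graph x)
      rw [WithLp.prod_inner_apply] at this
      rw [inner_neg_left]
      exact neg_eq_of_add_eq_zero_right this
    have hd : p.snd ∈ S.adjoint.domain :=
      LinearPMap.mem_adjoint_domain_of_exists _ ⟨_, h1⟩
    have h2 : S.adjoint ⟨p.snd, hd⟩ = -p.fst := LinearPMap.adjoint_apply_eq hS _ h1
    have h3 := h ⟨p.snd, hd⟩
    rw [h2, inner_neg_right] at h3
    rw [WithLp.prod_inner_apply]
    change inner ℂ w p.fst + inner ℂ f p.snd = 0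
    change inner ℂ f p.snd = _ at h3
    rw [h3, add_neg_cancel]
  rw [Submodule.orthogonal_orthogonal] at key
  exact key

/-- Riesz representation: a bound `|⟨f, v⟩| ≤ C ‖S† v‖` yields a preimage of `f`. -/
theorem mem_range_of_bound (S : E →ₗ.[ℂ] F) (hS : Dense (S.domain : Set E))
    (hc : S.IsClosed) (f : F) (C : ℝ)
    (h : ∀ v : S.adjoint.domain, ‖inner ℂ f (v : F)‖ ≤ C * ‖S.adjoint v‖) :
    ∃ x : S.domain, S x = f := by
  let A : S.adjoint.domain →ₗ[ℂ] E := S.adjoint.toFun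
  let l : S.adjoint.domain →ₗ[ℂ] ℂ := (innerₛₗ ℂ f).comp S.adjoint.domain.subtype
  have hl : ∀ v, ‖l v‖ ≤ C * ‖A v‖ := h
  have hker : LinearMap.ker A ≤ LinearMap.ker l := by
    intro v hv
    rw [LinearMap.mem_ker] at hv ⊢
    have := hl v
    rw [hv, norm_zero, mul_zero] at this
    exact norm_le_zero_iff.1 this
  let m : LinearMap.range A →ₗ[ℂ] ℂ :=
    ((LinearMap.ker A).liftQ l hker).comp A.quotKerEquivRange.symm.toLinearMap
  have hm : ∀ v, m ⟨A v, v, rfl⟩ = l v := by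
    intro v
    have : A.quotKerEquivRange.symm ⟨A v, v, rfl⟩ = (LinearMap.ker A).mkQ v := by
      rw [LinearEquiv.symm_apply_eq]
      rfl
    change (LinearMap.ker A).liftQ l hker (A.quotKerEquivRange.symm ⟨A v, v, rfl⟩) = _
    rw [this]
    simp
  let mc : StrongDual ℂ (LinearMap.range A) := m.mkContinuous C (by
    rintro ⟨_, v, rfl⟩
    rw [hm]
    exact hl v)
  obtain ⟨g, hg, -⟩ := exists_extension_norm_eq _ mc
  have hgr := mem_graph_of_adjoint S hS hc ((InnerProductSpace.toDual ℂ E).symm g) f (by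
    intro v
    rw [InnerProductSpace.toDual_symm_apply]
    exact ((hg ⟨A v, v, rfl⟩).trans (hm v)).symm)
  obtain ⟨y, -, hy⟩ := (S.mem_graph_iff).1 hgr
  exact ⟨y, hy⟩

end Aux


/-- Proposition 5.2(3), estimate form: for densely defined closed operators
`S : H₀ →ₗ.[ℂ] H₁`, `T : H₁ →ₗ.[ℂ] H₂` with `range S ⊆ ker T`, the estimate
`c ‖u‖² ≤ ‖T u‖² + ‖S† u‖²` for all `u ∈ dom T ∩ dom S†` (for some `c > 0`) holds if and
only if `range S` and `range T` are closed and `ker T = range S`. -/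
theorem stmt_9 {H₀ H₁ H₂ : Type*}
    [NormedAddCommGroup H₀] [InnerProductSpace ℂ H₀] [CompleteSpace H₀]
    [NormedAddCommGroup H₁] [InnerProductSpace ℂ H₁] [CompleteSpace H₁]
    [NormedAddCommGroup H₂] [InnerProductSpace ℂ H₂] [CompleteSpace H₂]
    (S : H₀ →ₗ.[ℂ] H₁) (T : H₁ →ₗ.[ℂ] H₂)
    (hSdense : Dense (S.domain : Set H₀)) (hTdense : Dense (T.domain : Set H₁))
    (hSclosed : S.IsClosed) (hTclosed : T.IsClosed)
    (hST : (Set.range fun x : S.domain => S x) ⊆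
      {u : H₁ | ∃ hu : u ∈ T.domain, T ⟨u, hu⟩ = 0}) :
    (∃ c > (0 : ℝ), ∀ (u : H₁) (hu₁ : u ∈ T.domain) (hu₂ : u ∈ S.adjoint.domain),
        c * ‖u‖ ^ 2 ≤ ‖T ⟨u, hu₁⟩‖ ^ 2 + ‖S.adjoint ⟨u, hu₂⟩‖ ^ 2) ↔
      (IsClosed (Set.range fun x : S.domain => S x) ∧
        IsClosed (Set.range fun x : T.domain => T x) ∧
        {u : H₁ | ∃ hu : u ∈ T.domain, T ⟨u, hu⟩ = 0} =
          Set.range fun x : S.domain => S x) := by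
  haveI : CompleteSpace (pker T) := (isClosed_pker T hTclosed).completeSpace_coe
  have hST' : ∀ x : S.domain, S x ∈ pker T := fun x => (mem_pker T _).2 (hST ⟨x, rfl⟩)
  have hadj := LinearPMap.adjoint_isFormalAdjoint hSdense
  constructor
  · rintro ⟨c, hc, h⟩
    have hperp : ∀ u ∈ (pker T)ᗮ, ∃ hu : u ∈ S.adjoint.domain, S.adjoint ⟨u, hu⟩ = 0 :=
      fun u hu => adjoint_of_orth S hSdense u fun x =>
        (Submodule.mem_orthogonal' _ _).1 hu _ (hST' x)
    have hsq : ∀ a b : ℝ, 0 ≤ b → c * a ^ 2 ≤ b ^ 2 → a ≤ (√c)⁻¹ * b := by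
      intro a b hb hab
      have hs : 0 < √c := Real.sqrt_pos.2 hc
      rw [inv_mul_eq_div, le_div_iff₀ hs]
      refine le_of_sq_le_sq ?_ hb
      rw [mul_pow, Real.sq_sqrt hc.le, mul_comm]
      exact hab
    have hker : ∀ f ∈ pker T, ∃ x : S.domain, S x = f := by
      intro f hf
      refine mem_range_of_bound S hSdense hSclosed f (‖f‖ * (√c)⁻¹) ?_
      intro v
      have hP : (pker T).starProjection (v : H₁) ∈ pker T :=
        Submodule.starProjection_apply_mem _ _
      have hQ := Submodule.sub_starProjection_mem_orthogonal (K := pker T) (v : H₁)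
      obtain ⟨hd, h0⟩ := hperp _ hQ
      obtain ⟨hPd, hP0⟩ := (mem_pker T _).1 hP
      have hsub := S.adjoint.map_sub v ⟨_, hd⟩
      rw [h0, sub_zero] at hsub
      have hval : ((v - ⟨_, hd⟩ : S.adjoint.domain) : H₁) =
          (pker T).starProjection (v : H₁) := by
        simp
      have hPd' : ((v - ⟨_, hd⟩ : S.adjoint.domain) : H₁) ∈ T.domain := by
        rw [hval]
        exact hPd
      have hb := h _ hPd' (v - ⟨_, hd⟩ : S.adjoint.domain).2
      have hT0 : T ⟨_, hPd'⟩ = 0 := by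
        rw [← hP0]
        congr 2
      rw [hT0, norm_zero, zero_pow two_ne_zero, zero_add] at hb
      change _ ≤ ‖S.adjoint (v - ⟨_, hd⟩)‖ ^ 2 at hb
      rw [hsub, hval] at hb
      have hb' := hsq _ _ (norm_nonneg _) hb
      have hin : inner ℂ f (v : H₁) = inner ℂ f ((pker T).starProjection (v : H₁)) := by
        have := (Submodule.mem_orthogonal _ _).1 hQ f hf
        rw [inner_sub_right] at this
        exact sub_eq_zero.1 this
      rw [hin, mul_assoc]
      exact (norm_inner_le_norm _ _).trans (by gcongr)
    have heq : {u : H₁ | ∃ hu : u ∈ T.domain, T ⟨u, hu⟩ = 0} =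
          Set.range fun x : S.domain => S x :=
      Set.Subset.antisymm (fun u hu => hker u ((mem_pker T u).2 hu)) hST
    refine ⟨?_, ?_, heq⟩
    · rw [← heq]
      convert isClosed_pker T hTclosed using 1
      ext u
      exact (mem_pker T u).symm
    · refine closed_range_of_bound T hTclosed (√c)⁻¹ fun x hx => ?_
      obtain ⟨hd, h0⟩ := hperp _ hx
      have hb := h x x.2 hd
      rw [h0, norm_zero, zero_pow two_ne_zero, add_zero] at hb
      exact hsq _ _ (norm_nonneg _) hb
  · rintro ⟨hRS, hRT, heq⟩
    obtain ⟨C, hC, hCT⟩ := open_mapping T hTclosed hRT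
    obtain ⟨D, hD, hDS⟩ := open_mapping S hSclosed hRS
    refine ⟨(C ^ 2 + D ^ 2)⁻¹, by positivity, fun u hu₁ hu₂ => ?_⟩
    have hP : (pker T).starProjection u ∈ pker T := Submodule.starProjection_apply_mem _ _
    have hQ := Submodule.sub_starProjection_mem_orthogonal (K := pker T) u
    set p := (pker T).starProjection u with hp
    set q := u - p with hq
    have hu : u = p + q := by simp [hq]
    have hpq : inner ℂ p q = 0 := (Submodule.mem_orthogonal _ _).1 hQ p hP
    have hqp : inner ℂ q p = 0 := (Submodule.mem_orthogonal' _ _).1 hQ p hP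
    -- the component in the kernel
    have hp1 : ‖p‖ ≤ D * ‖S.adjoint ⟨u, hu₂⟩‖ := by
      have hpR : p ∈ Set.range fun x : S.domain => S x := by
        rw [← heq]
        exact (mem_pker T p).1 hP
      obtain ⟨x, hx⟩ := hpR
      obtain ⟨w, hw, hwn⟩ := hDS x
      have hx' : S x = p := hx
      rw [hx'] at hw hwn
      have h1 := hadj ⟨u, hu₂⟩ w
      rw [hw] at h1
      have h2 : inner ℂ u p = inner ℂ p p := by
        conv_lhs => rw [hu]
        rw [inner_add_left, hqp, add_zero]
      have h3 : ‖p‖ * ‖p‖ ≤ ‖S.adjoint ⟨u, hu₂⟩‖ * (D * ‖p‖) := by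
        have h4 : ‖(inner ℂ p p : ℂ)‖ = ‖p‖ * ‖p‖ := by
          rw [inner_self_eq_norm_sq_to_K]; simp [sq]
        rw [← h4, ← h2]
        change ‖inner ℂ ((⟨u, hu₂⟩ : S.adjoint.domain) : H₁) p‖ ≤ _
        rw [← h1]
        exact (norm_inner_le_norm _ _).trans (by gcongr)
      rcases (norm_nonneg p).eq_or_lt with h0 | h0
      · rw [← h0]; positivity
      · refine le_of_mul_le_mul_right ?_ h0
        linarith
    have hq1 : ‖q‖ ≤ C * ‖T ⟨u, hu₁⟩‖ := by
      obtain ⟨w, hw, hwn⟩ := hCT ⟨u, hu₁⟩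
      have hk : u - w ∈ pker T :=
        (mem_pker T _).2 ⟨T.domain.sub_mem hu₁ w.2, by
          have := T.map_sub ⟨u, hu₁⟩ w
          rw [hw, sub_self] at this
          exact this⟩
      have h1 := (Submodule.mem_orthogonal' _ _).1 hQ _ hk
      rw [inner_sub_right, sub_eq_zero] at h1
      have h2 : inner ℂ q u = inner ℂ q q := by
        conv_lhs => rw [hu]
        rw [inner_add_right, hqp, zero_add]
      have h3 : ‖q‖ * ‖q‖ ≤ ‖q‖ * (C * ‖T ⟨u, hu₁⟩‖) := by
        have h4 : ‖(inner ℂ q q : ℂ)‖ = ‖q‖ * ‖q‖ := by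
          rw [inner_self_eq_norm_sq_to_K]; simp [sq]
        rw [← h4, ← h2, h1]
        exact (norm_inner_le_norm _ _).trans (by gcongr)
      rcases (norm_nonneg q).eq_or_lt with h0 | h0
      · rw [← h0]; positivity
      · exact le_of_mul_le_mul_left h3 h0
    have hn : ‖u‖ ^ 2 = ‖p‖ ^ 2 + ‖q‖ ^ 2 := by
      have := norm_add_sq_eq_norm_sq_add_norm_sq_of_inner_eq_zero p q hpq
      rw [← hu] at this
      simpa [sq] using this
    rw [inv_mul_le_iff₀ (by positivity), hn]
    have hp2 : ‖p‖ ^ 2 ≤ (D * ‖S.adjoint ⟨u, hu₂⟩‖) ^ 2 := by gcongr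
    have hq2 : ‖q‖ ^ 2 ≤ (C * ‖T ⟨u, hu₁⟩‖) ^ 2 := by gcongr
    have e1 := mul_nonneg (sq_nonneg C) (sq_nonneg ‖S.adjoint ⟨u, hu₂⟩‖)
    have e2 := mul_nonneg (sq_nonneg D) (sq_nonneg ‖T ⟨u, hu₁⟩‖)
    nlinarith
end
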